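/- arXiv:1509.03699 — 2 statements merged into one kernel-verified Lean document; each statement's English description precedes it below -/
import Mathlib

section
/- For every real number x with 0 < x < 1 and every p ∈ [0, 1] with p ≠ x/(1 + x − x²), one has max( 1/(p·x + (1 − p)), (1 + x)/(p·x + 1) ) > 1 + x − x²; that is, p* = x/(1 + x − x²) is the unique minimizer of f on [0, 1]. -/
/-!
Put `D = 1 + x - x ^ 2`. Both comparisons with `D` factor through `p * D - x`:
`(1 + x) - D * (p * x + 1) = x * (x - p * D)` and
`1 - D * (p * x + (1 - p)) = (1 - x) * (p * D - x)`.
So the second ratio exceeds `D` exactly to the left of `x / D`, the first exactly to the right.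
-/

section

variable {R : Type*} [CommRing R] [PartialOrder R] [IsStrictOrderedRing R] {x p : R}

lemma one_add_sub_sq_pos (hx0 : 0 ≤ x) (hx1 : x ≤ 1) : 0 < 1 + x - x ^ 2 :=
  calc
    0 < 1 + x * (1 - x) := add_pos_of_pos_of_nonneg one_pos (mul_nonneg hx0 (sub_nonneg.2 hx1))
    _ = 1 + x - x ^ 2 := by ring

lemma mul_add_one_sub_pos (hx0 : 0 < x) (hx1 : x ≤ 1) (hp : p ≤ 1) : 0 < p * x + (1 - p) :=
  calc
    0 < x + (1 - p) * (1 - x) :=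
      add_pos_of_pos_of_nonneg hx0 (mul_nonneg (sub_nonneg.2 hp) (sub_nonneg.2 hx1))
    _ = p * x + (1 - p) := by ring

end

section

variable {K : Type*} [Field K] [LinearOrder K] [IsStrictOrderedRing K] {x p : K}

lemma one_add_sub_sq_lt_one_add_div_iff (hx : 0 < x) (hD : 0 < 1 + x - x ^ 2)
    (hden : 0 < p * x + 1) :
    1 + x - x ^ 2 < (1 + x) / (p * x + 1) ↔ p < x / (1 + x - x ^ 2) := by
  have factorization : (1 + x) - (1 + x - x ^ 2) * (p * x + 1)
      = x * (x - p * (1 + x - x ^ 2)) := by ring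
  rw [lt_div_iff₀ hden, lt_div_iff₀ hD, ← sub_pos, factorization,
    mul_pos_iff_of_pos_left hx, sub_pos]

lemma one_add_sub_sq_lt_one_div_iff (hx : x < 1) (hD : 0 < 1 + x - x ^ 2)
    (hden : 0 < p * x + (1 - p)) :
    1 + x - x ^ 2 < 1 / (p * x + (1 - p)) ↔ x / (1 + x - x ^ 2) < p := by
  have factorization : 1 - (1 + x - x ^ 2) * (p * x + (1 - p))
      = (1 - x) * (p * (1 + x - x ^ 2) - x) := by ring
  rw [lt_div_iff₀ hden, div_lt_iff₀ hD, ← sub_pos, factorization,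
    mul_pos_iff_of_pos_left (sub_pos.2 hx), sub_pos]

theorem stmt_3_general (hx0 : 0 < x) (hx1 : x < 1)
    (hden₁ : 0 < p * x + (1 - p)) (hden₂ : 0 < p * x + 1) :
    1 + x - x ^ 2 < max (1 / (p * x + (1 - p))) ((1 + x) / (p * x + 1)) ↔
      p ≠ x / (1 + x - x ^ 2) := by
  have hD := one_add_sub_sq_pos hx0.le hx1.le
  rw [lt_max_iff, one_add_sub_sq_lt_one_div_iff hx1 hD hden₁,
    one_add_sub_sq_lt_one_add_div_iff hx0 hD hden₂, lt_or_lt_iff_ne, ne_comm]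

end

/-- For every real `x` with `0 < x < 1` and every `p ∈ [0,1]` with
`p ≠ x / (1 + x - x^2)`, one has
`max (1/(p*x + (1-p))) ((1+x)/(p*x + 1)) > 1 + x - x^2`;
that is, `p* = x / (1 + x - x^2)` is the unique minimizer on `[0,1]`. -/
theorem stmt_3 (x : ℝ) (hx0 : 0 < x) (hx1 : x < 1)
    (p : ℝ) (hp : p ∈ Set.Icc (0 : ℝ) 1) (hne : p ≠ x / (1 + x - x ^ 2)) :
    1 + x - x ^ 2 < max (1 / (p * x + (1 - p))) ((1 + x) / (p * x + 1)) :=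
  (stmt_3_general hx0 hx1 (mul_add_one_sub_pos hx0 hx1.le hp.2)
    (add_pos_of_nonneg_of_pos (mul_nonneg hp.1 hx0.le) one_pos)).2 hne
end

section
/- For all real numbers a and b with 0 < a < b, the function g(p) = max( b/(p·a + (1 − p)·b), (a + b)/(p·a + b) ) attains its minimum over p ∈ [0, 1], and the minimum value equals 1 + a/b − (a/b)². -/
/-!
In `p`, the one-job ratio increases and the two-job ratio decreases, so their maximum is least where
they agree. With `r = a / b` and `v = 1 + r - r ^ 2`, this happens at `p = r / v`: there the
denominators `p * a + (1 - p) * b` and `p * a + b` equal `b / v` and `(a + b) / v`, so both ratios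
are `v`. The crossing point lies in `[0, 1]` because `0 ≤ r ≤ 1 ≤ v`.
-/

theorem isLeast_image_max_of_monotoneOn_of_antitoneOn {α β : Type*} [LinearOrder α] [LinearOrder β]
    {f g : α → β} {s : Set α} {c : α} (hf : MonotoneOn f s) (hg : AntitoneOn g s) (hc : c ∈ s)
    (hfg : f c = g c) : IsLeast ((fun x => max (f x) (g x)) '' s) (f c) := by
  refine ⟨⟨c, hc, by simp [hfg]⟩, ?_⟩
  rintro _ ⟨x, hx, rfl⟩
  rcases le_total c x with hcx | hxc
  · exact le_max_of_le_left (hf hc hx hcx)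
  · exact le_max_of_le_right (hfg.trans_le (hg hx hc hxc))

section RandomFit

variable {K : Type*} [Field K] {a b : K}

/-- The ratio OPT/RF when the adversary releases one job, as a function of the probability `p` with
which Random-Fit schedules a job at its earliest time interval. -/
def oneJobRatio (a b p : K) : K :=
  b / (p * a + (1 - p) * b)

/-- The ratio OPT/RF when the adversary releases two conflicting jobs, as a function of the
probability `p` with which Random-Fit schedules a job at its earliest time interval. -/
def twoJobRatio (a b p : K) : K :=
  (a + b) / (p * a + b)

/-- The common value of the one-job and two-job ratios at `balancingProb a b`, which is the best
competitive ratio over all choices of the probability. -/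
def balancedRatio (a b : K) : K :=
  1 + a / b - (a / b) ^ 2

/-- The probability at which the one-job and two-job ratios agree, obtained by solving
`oneJobRatio a b p = twoJobRatio a b p` for `p`. -/
def balancingProb (a b : K) : K :=
  a / b / balancedRatio a b

theorem oneJobRatio_balancingProb (hb : b ≠ 0) (hv : balancedRatio a b ≠ 0) :
    oneJobRatio a b (balancingProb a b) = balancedRatio a b := by
  have denominator_eq :
      balancingProb a b * a + (1 - balancingProb a b) * b = b / balancedRatio a b := by
    rw [balancingProb]
    field_simp
    rw [balancedRatio]
    field_simp
    ring
  rw [oneJobRatio, denominator_eq, div_div_cancel₀ hb]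

theorem twoJobRatio_balancingProb (hb : b ≠ 0) (hab : a + b ≠ 0) (hv : balancedRatio a b ≠ 0) :
    twoJobRatio a b (balancingProb a b) = balancedRatio a b := by
  have denominator_eq : balancingProb a b * a + b = (a + b) / balancedRatio a b := by
    rw [balancingProb]
    field_simp
    rw [balancedRatio]
    field_simp
    ring
  rw [twoJobRatio, denominator_eq, div_div_cancel₀ hab]

variable [LinearOrder K] [IsStrictOrderedRing K]

theorem monotoneOn_oneJobRatio (ha : 0 < a) (hab : a ≤ b) :
    MonotoneOn (oneJobRatio a b) (Set.Iic 1) := by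
  intro p _ q (hq : q ≤ 1) hpq
  have denominator_pos : 0 < q * a + (1 - q) * b := by
    nlinarith [mul_nonneg (sub_nonneg.2 hq) (sub_nonneg.2 hab)]
  have denominator_le : q * a + (1 - q) * b ≤ p * a + (1 - p) * b := by
    nlinarith [mul_nonneg (sub_nonneg.2 hpq) (sub_nonneg.2 hab)]
  exact div_le_div_of_nonneg_left (ha.le.trans hab) denominator_pos denominator_le

theorem antitoneOn_twoJobRatio (ha : 0 ≤ a) (hb : 0 < b) :
    AntitoneOn (twoJobRatio a b) (Set.Ici 0) := by
  intro p (hp : 0 ≤ p) q _ hpq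
  have denominator_pos : 0 < p * a + b := by positivity
  have denominator_le : p * a + b ≤ q * a + b := by gcongr
  exact div_le_div_of_nonneg_left (by positivity) denominator_pos denominator_le

theorem one_le_balancedRatio (ha : 0 ≤ a) (hab : a ≤ b) : 1 ≤ balancedRatio a b := by
  have hr₀ : 0 ≤ a / b := div_nonneg ha (ha.trans hab)
  have hr₁ : a / b ≤ 1 := div_le_one_of_le₀ hab (ha.trans hab)
  have sq_le : (a / b) ^ 2 ≤ a / b := pow_le_of_le_one hr₀ hr₁ two_ne_zero
  rw [balancedRatio]
  linarith

theorem balancingProb_mem_Icc (ha : 0 ≤ a) (hab : a ≤ b) :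
    balancingProb a b ∈ Set.Icc 0 1 := by
  have hv : 1 ≤ balancedRatio a b := one_le_balancedRatio ha hab
  have hv₀ : 0 ≤ balancedRatio a b := zero_le_one.trans hv
  have hr₁ : a / b ≤ 1 := div_le_one_of_le₀ hab (ha.trans hab)
  exact ⟨div_nonneg (div_nonneg ha (ha.trans hab)) hv₀, div_le_one_of_le₀ (hr₁.trans hv) hv₀⟩

end RandomFit

theorem stmt_4_general {K : Type*} [Field K] [LinearOrder K] [IsStrictOrderedRing K] {a b : K}
    (ha : 0 < a) (hab : a ≤ b) :
    IsLeast
      ((fun p : K => max (b / (p * a + (1 - p) * b)) ((a + b) / (p * a + b))) '' Set.Icc (0 : K) 1)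
      (1 + a / b - (a / b) ^ 2) := by
  have hb : 0 < b := ha.trans_le hab
  have hv : balancedRatio a b ≠ 0 := (zero_lt_one.trans_le (one_le_balancedRatio ha.le hab)).ne'
  have h_one : oneJobRatio a b (balancingProb a b) = balancedRatio a b :=
    oneJobRatio_balancingProb hb.ne' hv
  have h_two : twoJobRatio a b (balancingProb a b) = balancedRatio a b :=
    twoJobRatio_balancingProb hb.ne' (add_pos ha hb).ne' hv
  have h_least := isLeast_image_max_of_monotoneOn_of_antitoneOn
    ((monotoneOn_oneJobRatio ha hab).mono Set.Icc_subset_Iic_self)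
    ((antitoneOn_twoJobRatio ha.le hb).mono Set.Icc_subset_Ici_self)
    (balancingProb_mem_Icc ha.le hab) (h_one.trans h_two.symm)
  rwa [h_one] at h_least

/-- For all reals `a`, `b` with `0 < a < b`, the function
`g(p) = max (b/(p*a + (1-p)*b)) ((a+b)/(p*a + b))` attains its minimum over `p ∈ [0,1]`,
and the minimum value equals `1 + a/b - (a/b)^2`. -/
theorem stmt_4 (a b : ℝ) (ha : 0 < a) (hab : a < b) :
    IsLeast
      ((fun p : ℝ => max (b / (p * a + (1 - p) * b)) ((a + b) / (p * a + b))) ''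
        Set.Icc (0 : ℝ) 1)
      (1 + a / b - (a / b) ^ 2) :=
  stmt_4_general ha hab.le
end
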